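/- Let 0 < α < 1, t > 0, a ≥ 0, d > 0 and let N ∈ {2,3}. Then ∫_{ℝ^N} E_α((a − 4π² d |ξ|²) t^α) dξ = +∞; that is, the (everywhere positive) function ξ ↦ E_α((a − 4π² d |ξ|²) t^α) is not integrable on ℝ^N. In particular, the fundamental solution u satisfies u(0,t) = +∞ for all t > 0. -/

import Mathlib

open Real MeasureTheory

/-- The Mittag-Leffler function `E_α(r) = ∑ r^k / Γ(1+kα)`. -/
noncomputable def mittagLeffler (α r : ℝ) : ℝ :=
  ∑' k : ℕ, r ^ k / Real.Gamma (1 + k * α)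

/-!
For `0 < α < 1`, the function `s ↦ E_α(z s^α)` solves the relaxation equation `∂_t^α u = z u`,
`u(0) = 1`. With the fractional derivative at `s = 1` in Marchaud form, this reads
`α ∫_0^1 (E_α(z) - E_α(z (1 - r)^α)) r^(-α-1) dr = Γ(1-α) z E_α(z) + 1 - E_α(z)`,
and it follows termwise from Euler's beta integral. If `E_α` is minimal over `[z, 0]` at `z`, then
the left-hand side is nonpositive, so `E_α(z) ≥ 1 / (1 + Γ(1-α) |z|)`; evaluating at a minimum
point extends this bound to all `z ≤ 0`. Hence `E_α(b - c |ξ|²)` is positive and decays no faster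
than `|ξ|⁻²`, which is not integrable at infinity in dimension at least two.
-/

open Filter Set Topology

lemma integral_rpow_mul_one_sub_rpow {p q : ℝ} (hp : 0 < p) (hq : 0 < q) :
    ∫ r in (0 : ℝ)..1, r ^ (p - 1) * (1 - r) ^ (q - 1) = Gamma p * Gamma q / Gamma (p + q) := by
  rw [← ProbabilityTheory.beta, ProbabilityTheory.beta_eq_betaIntegralReal p q hp hq,
    ← Complex.ofReal_re (∫ r in (0 : ℝ)..1, _), ← intervalIntegral.integral_ofReal,
    Complex.betaIntegral]
  congr 1
  refine intervalIntegral.integral_congr fun r hr => ?_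
  rw [uIcc_of_le zero_le_one] at hr
  push_cast [Complex.ofReal_cpow hr.1, Complex.ofReal_cpow (sub_nonneg.2 hr.2)]
  rfl

lemma intervalIntegrable_rpow_mul_one_sub_rpow {p q : ℝ} (hp : 0 < p) (hq : 0 < q) :
    IntervalIntegrable (fun r : ℝ => r ^ (p - 1) * (1 - r) ^ (q - 1)) volume 0 1 :=
  intervalIntegral.intervalIntegrable_of_integral_ne_zero <| by
    rw [integral_rpow_mul_one_sub_rpow hp hq]
    exact (ProbabilityTheory.beta_pos hp hq).ne'

/-- The integrand `(1 - (1 - r) ^ β) * r ^ γ`. For `γ = -α - 1`, its integral over `[0, 1]` is, up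
to a constant, the nonlocal part of the Marchaud fractional derivative of order `α` of `s ↦ s ^ β`
at `s = 1`, written in the variable `r = 1 - s`. The exponent `γ` is left free because the primitive
used to evaluate the integral is of the same form, with exponent `γ + 1`. -/
noncomputable def marchaudKernel (β γ r : ℝ) : ℝ :=
  (1 - (1 - r) ^ β) * r ^ γ

lemma marchaudKernel_nonneg {β r : ℝ} (γ : ℝ) (hβ : 0 ≤ β) (hr0 : 0 ≤ r) (hr1 : r ≤ 1) :
    0 ≤ marchaudKernel β γ r :=
  mul_nonneg (sub_nonneg.2 (rpow_le_one (sub_nonneg.2 hr1) (sub_le_self 1 hr0) hβ))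
    (rpow_nonneg hr0 γ)

lemma one_sub_one_sub_rpow_le {β r : ℝ} (hβ : 0 ≤ β) (hr0 : 0 ≤ r) (hr1 : r ≤ 1) :
    1 - (1 - r) ^ β ≤ (1 + β) * r := by
  rcases le_total β 1 with hβ1 | hβ1
  · have hself : 1 - r ≤ (1 - r) ^ β :=
      self_le_rpow_of_le_one (sub_nonneg.2 hr1) (sub_le_self 1 hr0) hβ1
    nlinarith
  · have hbernoulli : 1 + β * -r ≤ (1 + -r) ^ β :=
      one_add_mul_self_le_rpow_one_add (neg_le_neg hr1) hβ1
    rw [← sub_eq_add_neg] at hbernoulli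
    linarith

lemma marchaudKernel_le {β r : ℝ} (γ : ℝ) (hβ : 0 ≤ β) (hr0 : 0 < r) (hr1 : r ≤ 1) :
    marchaudKernel β γ r ≤ (1 + β) * r ^ (γ + 1) := by
  rw [marchaudKernel, rpow_add_one hr0.ne', mul_comm (r ^ γ), ← mul_assoc]
  gcongr
  exact one_sub_one_sub_rpow_le hβ hr0.le hr1

lemma intervalIntegrable_marchaudKernel {β γ : ℝ} (hβ : 0 ≤ β) (hγ : -2 < γ) :
    IntervalIntegrable (marchaudKernel β γ) volume 0 1 := by
  have hmajorant : IntervalIntegrable (fun r : ℝ => (1 + β) * r ^ (γ + 1)) volume 0 1 :=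
    (intervalIntegral.intervalIntegrable_rpow' (by linarith)).const_mul _
  have hmeas : Measurable (marchaudKernel β γ) := by
    unfold marchaudKernel
    fun_prop
  refine hmajorant.mono_fun' hmeas.aestronglyMeasurable ?_
  rw [uIoc_of_le zero_le_one]
  filter_upwards [ae_restrict_mem measurableSet_Ioc] with r ⟨hr0, hr1⟩
  rw [norm_of_nonneg (marchaudKernel_nonneg γ hβ hr0.le hr1)]
  exact marchaudKernel_le γ hβ hr0 hr1

lemma tendsto_marchaudKernel_zero {β γ : ℝ} (hβ : 0 ≤ β) (hγ : -1 < γ) :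
    Tendsto (marchaudKernel β γ) (𝓝[>] 0) (𝓝 0) := by
  have hexp : 0 < γ + 1 := by linarith
  have hbound : Tendsto (fun r : ℝ => (1 + β) * r ^ (γ + 1)) (𝓝[>] 0) (𝓝 0) := by
    have hcont : Continuous fun r : ℝ => (1 + β) * r ^ (γ + 1) :=
      (continuous_rpow_const hexp.le).const_mul _
    simpa [zero_rpow hexp.ne'] using (hcont.tendsto 0).mono_left nhdsWithin_le_nhds
  refine squeeze_zero' ?_ ?_ hbound <;>
    filter_upwards [Ioo_mem_nhdsGT zero_lt_one] with r ⟨hr0, hr1⟩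
  · exact marchaudKernel_nonneg γ hβ hr0.le hr1.le
  · exact marchaudKernel_le γ hβ hr0 hr1.le

lemma tendsto_marchaudKernel_one {β : ℝ} (hβ : 0 < β) (γ : ℝ) :
    Tendsto (marchaudKernel β γ) (𝓝[<] 1) (𝓝 1) := by
  have hcont : ContinuousAt (marchaudKernel β γ) 1 := by
    unfold marchaudKernel
    fun_prop (disch := simp [hβ.le])
  simpa [marchaudKernel, zero_rpow hβ.ne'] using hcont.tendsto.mono_left nhdsWithin_le_nhds

lemma hasDerivAt_marchaudKernel (β γ : ℝ) {r : ℝ} (hr0 : 0 < r) (hr1 : r < 1) :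
    HasDerivAt (marchaudKernel β γ)
      (β * (r ^ γ * (1 - r) ^ (β - 1)) + γ * marchaudKernel β (γ - 1) r) r := by
  have hleft : HasDerivAt (fun r : ℝ => 1 - (1 - r) ^ β) (β * (1 - r) ^ (β - 1)) r := by
    simpa using (((hasDerivAt_id r).const_sub 1).rpow_const
      (p := β) (Or.inl (sub_pos.2 hr1).ne')).const_sub 1
  have hright : HasDerivAt (fun r : ℝ => r ^ γ) (γ * r ^ (γ - 1)) r :=
    hasDerivAt_rpow_const (Or.inl hr0.ne')
  convert! hleft.mul hright using 1
  rw [marchaudKernel]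
  ring

lemma mul_integral_marchaudKernel {β γ : ℝ} (hβ : 0 ≤ β) (hγ : -1 < γ) :
    γ * ∫ r in (0 : ℝ)..1, marchaudKernel β (γ - 1) r =
      1 - Gamma (γ + 1) * Gamma (β + 1) / Gamma (β + γ + 1) := by
  have hγ' : 0 < γ + 1 := by linarith
  rcases hβ.eq_or_lt with rfl | hβ'
  · simp [marchaudKernel, (Gamma_pos_of_pos hγ').ne']
  have hbeta : ∫ r in (0 : ℝ)..1, r ^ γ * (1 - r) ^ (β - 1) =
      Gamma (γ + 1) * Gamma β / Gamma (γ + 1 + β) := by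
    simpa using integral_rpow_mul_one_sub_rpow hγ' hβ'
  have hbeta_int :
      IntervalIntegrable (fun r : ℝ => β * (r ^ γ * (1 - r) ^ (β - 1))) volume 0 1 := by
    simpa using (intervalIntegrable_rpow_mul_one_sub_rpow hγ' hβ').const_mul β
  have hkernel_int : IntervalIntegrable (fun r => γ * marchaudKernel β (γ - 1) r) volume 0 1 :=
    (intervalIntegrable_marchaudKernel hβ (by linarith)).const_mul γ
  have hftc := intervalIntegral.integral_eq_sub_of_hasDerivAt_of_tendsto zero_lt_one
    (fun r hr => hasDerivAt_marchaudKernel β γ hr.1 hr.2) (hbeta_int.add hkernel_int)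
    (tendsto_marchaudKernel_zero hβ hγ) (tendsto_marchaudKernel_one hβ' γ)
  rw [intervalIntegral.integral_add hbeta_int hkernel_int, intervalIntegral.integral_const_mul,
    intervalIntegral.integral_const_mul, hbeta] at hftc
  rw [Gamma_add_one hβ'.ne', show β + γ + 1 = γ + 1 + β by ring]
  linear_combination hftc

lemma rpow_mul_exp_neg_le_Gamma {M y : ℝ} (hM : 0 ≤ M) (hy : 0 ≤ y) :
    M ^ y * exp (-M) ≤ Gamma (1 + y) := by
  have hconv : IntegrableOn (fun x => exp (-x) * x ^ (1 + y - 1)) (Ioi 0) :=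
    GammaIntegral_convergent (by positivity)
  have hsub : Ioi M ⊆ Ioi 0 := Ioi_subset_Ioi hM
  calc M ^ y * exp (-M) = ∫ x in Ioi M, M ^ y * exp (-x) := by
        rw [integral_const_mul, integral_exp_neg_Ioi]
    _ ≤ ∫ x in Ioi M, exp (-x) * x ^ (1 + y - 1) := by
        refine setIntegral_mono_on ((integrableOn_exp_neg_Ioi M).const_mul _)
          (hconv.mono_set hsub) measurableSet_Ioi fun x (hx : M < x) => ?_
        rw [mul_comm, add_sub_cancel_left]
        gcongr
    _ ≤ ∫ x in Ioi 0, exp (-x) * x ^ (1 + y - 1) := by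
        refine setIntegral_mono_set hconv ?_ hsub.eventuallyLE
        filter_upwards [ae_restrict_mem measurableSet_Ioi] with x (hx : 0 < x)
        exact mul_nonneg (exp_nonneg _) (rpow_nonneg hx.le _)
    _ = Gamma (1 + y) := (Gamma_eq_integral (by positivity)).symm

lemma Gamma_one_add_natCast_mul_pos {α : ℝ} (hα : 0 ≤ α) (k : ℕ) : 0 < Gamma (1 + k * α) :=
  Gamma_pos_of_pos (by positivity)

lemma pow_div_Gamma_le_exp {α R : ℝ} (hα : 0 < α) (hR : 0 ≤ R) (k : ℕ) :
    R ^ k / Gamma (1 + k * α) ≤ exp (R ^ α⁻¹) := by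
  have hpow : (R ^ α⁻¹) ^ (k * α) = R ^ k := by
    rw [mul_comm, rpow_mul (by positivity), rpow_inv_rpow hR hα.ne', rpow_natCast]
  have hle := rpow_mul_exp_neg_le_Gamma (rpow_nonneg hR α⁻¹) (y := k * α) (by positivity)
  rw [hpow, exp_neg, ← div_eq_mul_inv, div_le_iff₀ (exp_pos _)] at hle
  rwa [div_le_iff₀' (Gamma_one_add_natCast_mul_pos hα.le k)]

lemma summable_mittagLeffler {α : ℝ} (hα : 0 < α) (z : ℝ) :
    Summable fun k : ℕ => z ^ k / Gamma (1 + k * α) := by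
  set R := |z| + 1
  have hR : 0 < R := by positivity
  have hgeom : Summable fun k : ℕ => exp (R ^ α⁻¹) * (|z| / R) ^ k :=
    (summable_geometric_of_lt_one (by positivity) ((div_lt_one hR).2 (lt_add_one _))).mul_left _
  refine hgeom.of_norm_bounded fun k => ?_
  have hΓ := Gamma_one_add_natCast_mul_pos hα.le k
  calc ‖z ^ k / Gamma (1 + k * α)‖ = R ^ k / Gamma (1 + k * α) * (|z| / R) ^ k := by
        rw [norm_div, norm_pow, norm_of_nonneg hΓ.le, Real.norm_eq_abs, div_mul_eq_mul_div,
          ← mul_pow, mul_div_cancel₀ _ hR.ne']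
    _ ≤ exp (R ^ α⁻¹) * (|z| / R) ^ k := by
        gcongr
        exact pow_div_Gamma_le_exp hα hR.le k

lemma hasSum_mittagLeffler {α : ℝ} (hα : 0 < α) (z : ℝ) :
    HasSum (fun k : ℕ => z ^ k / Gamma (1 + k * α)) (mittagLeffler α z) :=
  (summable_mittagLeffler hα z).hasSum

lemma one_le_mittagLeffler {α z : ℝ} (hα : 0 < α) (hz : 0 ≤ z) : 1 ≤ mittagLeffler α z := by
  simpa using le_hasSum (hasSum_mittagLeffler hα z) 0 fun k _ =>
    div_nonneg (pow_nonneg hz k) (Gamma_one_add_natCast_mul_pos hα.le k).le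

lemma continuous_mittagLeffler {α : ℝ} (hα : 0 < α) : Continuous (mittagLeffler α) := by
  refine continuous_iff_continuousAt.2 fun x => ?_
  have hball : Metric.closedBall (0 : ℝ) (|x| + 1) ∈ 𝓝 x :=
    Metric.closedBall_mem_nhds_of_mem (by simp)
  refine (continuousOn_tsum (fun k => by fun_prop) (summable_mittagLeffler hα (|x| + 1))
    fun k y hy => ?_).continuousAt hball
  have hΓ := Gamma_one_add_natCast_mul_pos hα.le k
  rw [norm_div, norm_pow, norm_of_nonneg hΓ.le]
  gcongr
  exact mem_closedBall_zero_iff.1 hy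

lemma hasSum_pow_div_Gamma_one_add_sub {α : ℝ} (hα : 0 < α) (z : ℝ) :
    HasSum (fun k : ℕ => z ^ k / Gamma (1 + k * α - α))
      (1 / Gamma (1 - α) + z * mittagLeffler α z) := by
  rw [← hasSum_nat_add_iff' 1]
  convert! (hasSum_mittagLeffler hα z).mul_left z using 1
  · ext k
    push_cast
    rw [show 1 + ((k : ℝ) + 1) * α - α = 1 + k * α by ring]
    ring
  · simp

lemma hasSum_integral_marchaudKernel {α : ℝ} (hα : 0 < α) (hα1 : α < 1) (z : ℝ) :
    HasSum (fun k : ℕ => α *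
        ∫ r in (0 : ℝ)..1, z ^ k / Gamma (1 + k * α) * marchaudKernel (k * α) (-α - 1) r)
      (Gamma (1 - α) * z * mittagLeffler α z + 1 - mittagLeffler α z) := by
  convert! ((hasSum_pow_div_Gamma_one_add_sub hα z).mul_left (Gamma (1 - α))).sub
    (hasSum_mittagLeffler hα z) using 1
  · ext k
    have hintegral := mul_integral_marchaudKernel (β := k * α) (by positivity) (neg_lt_neg hα1)
    rw [show k * α + -α + 1 = 1 + k * α - α by ring, add_comm (-α), add_comm (k * α),
      ← sub_eq_add_neg, neg_mul] at hintegral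
    have := Gamma_one_add_natCast_mul_pos hα.le k
    rw [intervalIntegral.integral_const_mul, mul_left_comm, neg_eq_iff_eq_neg.1 hintegral]
    field_simp
    ring
  · have := Gamma_pos_of_pos (sub_pos.2 hα1)
    field_simp
    ring

lemma hasSum_mittagLeffler_sub_mul_rpow {α r : ℝ} (hα : 0 < α) (hr : r ≤ 1) (γ z : ℝ) :
    HasSum (fun k : ℕ => z ^ k / Gamma (1 + k * α) * marchaudKernel (k * α) γ r)
      ((mittagLeffler α z - mittagLeffler α (z * (1 - r) ^ α)) * r ^ γ) := by
  refine (((hasSum_mittagLeffler hα z).sub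
    (hasSum_mittagLeffler hα (z * (1 - r) ^ α))).mul_right (r ^ γ)).congr_fun fun k => ?_
  rw [mul_pow, ← rpow_mul_natCast (sub_nonneg.2 hr), mul_comm α, marchaudKernel]
  ring

lemma mul_integral_mittagLeffler_sub_mul_rpow {α : ℝ} (hα : 0 < α) (hα1 : α < 1) (z : ℝ) :
    α * ∫ r in (0 : ℝ)..1, (mittagLeffler α z - mittagLeffler α (z * (1 - r) ^ α)) * r ^ (-α - 1) =
      Gamma (1 - α) * z * mittagLeffler α z + 1 - mittagLeffler α z := by
  set term : ℝ → ℕ → ℝ → ℝ := fun w k r =>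
    w ^ k / Gamma (1 + k * α) * marchaudKernel (k * α) (-α - 1) r
  have hint (k : ℕ) : IntegrableOn (term z k) (Ioc 0 1) :=
    (intervalIntegrable_iff_integrableOn_Ioc_of_le zero_le_one).1 <|
      (intervalIntegrable_marchaudKernel (by positivity) (by linarith)).const_mul _
  have hnorm (k : ℕ) : ∫ r in Ioc (0 : ℝ) 1, ‖term z k r‖ = ∫ r in (0 : ℝ)..1, term |z| k r := by
    rw [intervalIntegral.integral_of_le zero_le_one]
    refine setIntegral_congr_fun measurableSet_Ioc fun r ⟨hr0, hr1⟩ => ?_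
    have hΓ := Gamma_one_add_natCast_mul_pos hα.le k
    have hkernel : 0 ≤ marchaudKernel (k * α) (-α - 1) r :=
      marchaudKernel_nonneg _ (by positivity) hr0.le hr1
    simp only [term, norm_mul, norm_div, norm_pow, norm_of_nonneg hΓ.le, norm_of_nonneg hkernel,
      Real.norm_eq_abs z]
  have hsummable : Summable fun k => ∫ r in Ioc (0 : ℝ) 1, ‖term z k r‖ := by
    rw [← summable_mul_left_iff hα.ne']
    simpa only [hnorm] using (hasSum_integral_marchaudKernel hα hα1 |z|).summable
  have hswap := (hasSum_integral_of_summable_integral_norm hint hsummable).mul_left α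
  simp only [← intervalIntegral.integral_of_le (zero_le_one' ℝ)] at hswap
  rw [← hswap.unique (hasSum_integral_marchaudKernel hα hα1 z)]
  congr 1
  refine intervalIntegral.integral_congr fun r hr => ?_
  rw [uIcc_of_le zero_le_one] at hr
  exact (hasSum_mittagLeffler_sub_mul_rpow hα hr.2 _ z).tsum_eq.symm

lemma one_le_mul_mittagLeffler_of_forall_le {α z : ℝ} (hα : 0 < α) (hα1 : α < 1)
    (hmin : ∀ r ∈ Icc (0 : ℝ) 1, mittagLeffler α z ≤ mittagLeffler α (z * (1 - r) ^ α)) :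
    1 ≤ (1 - Gamma (1 - α) * z) * mittagLeffler α z := by
  have hnonpos : ∫ r in (0 : ℝ)..1,
      (mittagLeffler α z - mittagLeffler α (z * (1 - r) ^ α)) * r ^ (-α - 1) ≤ 0 := by
    rw [intervalIntegral.integral_of_le zero_le_one]
    exact setIntegral_nonpos measurableSet_Ioc fun r hr => mul_nonpos_of_nonpos_of_nonneg
      (sub_nonpos.2 (hmin r (Ioc_subset_Icc_self hr))) (rpow_nonneg hr.1.le _)
  have hidentity := mul_integral_mittagLeffler_sub_mul_rpow hα hα1 z
  nlinarith

lemma inv_one_add_Gamma_mul_abs_le_mittagLeffler {α : ℝ} (hα : 0 < α) (hα1 : α < 1) (z : ℝ) :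
    (1 + Gamma (1 - α) * |z|)⁻¹ ≤ mittagLeffler α z := by
  have := Gamma_pos_of_pos (sub_pos.2 hα1)
  rcases le_total 0 z with hz | hz
  · exact (inv_le_one_of_one_le₀ (le_add_of_nonneg_right (by positivity))).trans
      (one_le_mittagLeffler hα hz)
  obtain ⟨w, ⟨hzw, hw⟩, hmin⟩ := isCompact_Icc.exists_isMinOn (nonempty_Icc.2 hz)
    (continuous_mittagLeffler hα).continuousOn
  have hw_le : 1 ≤ (1 - Gamma (1 - α) * w) * mittagLeffler α w := by
    refine one_le_mul_mittagLeffler_of_forall_le hα hα1 fun r ⟨hr0, hr1⟩ => hmin ?_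
    have hs0 : 0 ≤ (1 - r) ^ α := rpow_nonneg (sub_nonneg.2 hr1) α
    have hs1 : (1 - r) ^ α ≤ 1 := rpow_le_one (sub_nonneg.2 hr1) (sub_le_self 1 hr0) hα.le
    constructor <;> nlinarith
  calc (1 + Gamma (1 - α) * |z|)⁻¹ ≤ (1 + Gamma (1 - α) * |w|)⁻¹ := by
        rw [abs_of_nonpos hz, abs_of_nonpos hw]
        have := neg_nonneg.2 hw
        gcongr
    _ ≤ mittagLeffler α w := by
        rwa [inv_le_iff_one_le_mul₀ (by positivity), abs_of_nonpos hw, mul_neg, ← sub_eq_add_neg,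
          mul_comm]
    _ ≤ mittagLeffler α z := hmin ⟨le_rfl, hz⟩

lemma mittagLeffler_pos {α : ℝ} (hα : 0 < α) (hα1 : α < 1) (z : ℝ) : 0 < mittagLeffler α z := by
  have := Gamma_pos_of_pos (sub_pos.2 hα1)
  exact lt_of_lt_of_le (by positivity) (inv_one_add_Gamma_mul_abs_le_mittagLeffler hα hα1 z)

section Haar

variable {E : Type*} [NormedAddCommGroup E] [NormedSpace ℝ E] [FiniteDimensional ℝ E]
  [MeasurableSpace E] [BorelSpace E] (μ : Measure E) [μ.IsAddHaarMeasure]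

lemma not_integrable_inv_add_mul_norm_pow [Nontrivial E] {k : ℕ} (hk : k ≤ Module.finrank ℝ E)
    {A B : ℝ} (hA : 0 < A) (hB : 0 ≤ B) : ¬ Integrable (fun x : E => (A + B * ‖x‖ ^ k)⁻¹) μ := by
  intro hint
  rw [integrable_fun_norm_addHaar μ (f := fun y => (A + B * y ^ k)⁻¹)] at hint
  refine not_integrableOn_Ioi_inv (a := 1) ?_
  refine ((hint.mono_set (Ioi_subset_Ioi zero_le_one)).const_mul (A + B)).mono'
    measurable_inv.aestronglyMeasurable ?_
  filter_upwards [ae_restrict_mem measurableSet_Ioi] with y (hy : 1 < y)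
  have hy0 : 0 < y := zero_lt_one.trans hy
  have hden : A + B * y ^ k ≤ (A + B) * y ^ Module.finrank ℝ E := by
    rw [add_mul]
    gcongr
    · exact le_mul_of_one_le_right hA.le (one_le_pow₀ hy.le)
    · exact hy.le
  rw [norm_of_nonneg (by positivity), smul_eq_mul, ← div_eq_mul_inv, mul_div_assoc',
    le_div_iff₀ (by positivity), inv_mul_le_iff₀ hy0]
  rwa [mul_left_comm, mul_pow_sub_one Module.finrank_pos.ne']

theorem fourier_fundamental_solution_integral_top_general
    {α : ℝ} (hα : 0 < α) (hα1 : α < 1) (hE : 2 ≤ Module.finrank ℝ E) (b c : ℝ) :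
    (∀ ξ : E, 0 < mittagLeffler α (b - c * ‖ξ‖ ^ 2)) ∧
    (∫⁻ ξ : E, ENNReal.ofReal (mittagLeffler α (b - c * ‖ξ‖ ^ 2)) ∂μ = ⊤) ∧
    ¬ Integrable (fun ξ : E => mittagLeffler α (b - c * ‖ξ‖ ^ 2)) μ := by
  have : Nontrivial E := Module.nontrivial_of_finrank_pos (R := ℝ) (by lia)
  have := Gamma_pos_of_pos (sub_pos.2 hα1)
  have hpos (ξ : E) := mittagLeffler_pos hα hα1 (b - c * ‖ξ‖ ^ 2)
  have hlower (ξ : E) : (1 + Gamma (1 - α) * |b| + Gamma (1 - α) * |c| * ‖ξ‖ ^ 2)⁻¹ ≤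
      mittagLeffler α (b - c * ‖ξ‖ ^ 2) := by
    refine le_trans ?_ (inv_one_add_Gamma_mul_abs_le_mittagLeffler hα hα1 _)
    rw [mul_assoc, add_assoc, ← mul_add]
    gcongr
    exact (abs_sub _ _).trans_eq (by rw [abs_mul, abs_of_nonneg (sq_nonneg ‖ξ‖)])
  have hcont : Continuous fun ξ : E => mittagLeffler α (b - c * ‖ξ‖ ^ 2) :=
    (continuous_mittagLeffler hα).comp (by fun_prop)
  have hnot : ¬ Integrable (fun ξ : E => mittagLeffler α (b - c * ‖ξ‖ ^ 2)) μ := fun hint =>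
    not_integrable_inv_add_mul_norm_pow μ hE (A := 1 + Gamma (1 - α) * |b|)
      (B := Gamma (1 - α) * |c|) (by positivity) (by positivity) <|
      hint.mono' (Measurable.aestronglyMeasurable (by fun_prop)) <| .of_forall fun ξ => by
        rw [norm_of_nonneg (by positivity)]
        exact hlower ξ
  refine ⟨hpos, ?_, hnot⟩
  rwa [← lintegral_ofReal_ne_top_iff_integrable hcont.aestronglyMeasurable
    (.of_forall fun ξ => (hpos ξ).le), not_not] at hnot

end Haar

theorem fourier_fundamental_solution_integral_top
    (α t a d : ℝ) (hα : 0 < α) (hα1 : α < 1) (ht : 0 < t) (ha : 0 ≤ a) (hd : 0 < d)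
    (N : ℕ) (hN : N = 2 ∨ N = 3) :
    (∀ ξ : EuclideanSpace ℝ (Fin N),
        0 < mittagLeffler α ((a - 4 * π ^ 2 * d * ‖ξ‖ ^ 2) * t ^ α)) ∧
    (∫⁻ ξ : EuclideanSpace ℝ (Fin N),
        ENNReal.ofReal (mittagLeffler α ((a - 4 * π ^ 2 * d * ‖ξ‖ ^ 2) * t ^ α)) = ⊤) ∧
    ¬ Integrable (fun ξ : EuclideanSpace ℝ (Fin N) =>
        mittagLeffler α ((a - 4 * π ^ 2 * d * ‖ξ‖ ^ 2) * t ^ α))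
      (volume : Measure (EuclideanSpace ℝ (Fin N))) := by
  simpa only [sub_mul, mul_right_comm _ (‖_‖ ^ 2) (t ^ α)] using
    fourier_fundamental_solution_integral_top_general
      (volume : Measure (EuclideanSpace ℝ (Fin N))) hα hα1 (by rw [finrank_euclideanSpace_fin]; lia)
      (a * t ^ α) (4 * π ^ 2 * d * t ^ α)
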